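/- arXiv:1003.4640 — 3 statements merged into one kernel-verified Lean document; each statement's English description precedes it below -/
import Mathlib

section
/- The functions p, β, 𝒦 are pairwise in involution: regarding p, 𝒦, and the coordinate function β as smooth functions of (r, θ, φ, ξ, α, β) on the open set where Δ(r) ≠ 0 and θ ∈ (0, π), the functions p and 𝒦 do not depend on φ, and the Poisson brackets satisfy {p, β} = 0, {β, 𝒦} = 0, and {p, 𝒦} = 0 on this set. -/
/-- The Poisson bracket of two functions of the six variables (r, θ, φ, ξ, α, β),
{f, g} = ∂f/∂ξ·∂g/∂r − ∂f/∂r·∂g/∂ξ + ∂f/∂α·∂g/∂θ − ∂f/∂θ·∂g/∂α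
          + ∂f/∂β·∂g/∂φ − ∂f/∂φ·∂g/∂β. -/
noncomputable def poissonBracket6 (f g : ℝ → ℝ → ℝ → ℝ → ℝ → ℝ → ℝ)
    (r θ φ ξ α β : ℝ) : ℝ :=
    deriv (fun x => f r θ φ x α β) ξ * deriv (fun x => g x θ φ ξ α β) r
  - deriv (fun x => f x θ φ ξ α β) r * deriv (fun x => g r θ φ x α β) ξ
  + deriv (fun x => f r θ φ ξ x β) α * deriv (fun x => g r x φ ξ α β) θ
  - deriv (fun x => f r x φ ξ α β) θ * deriv (fun x => g r θ φ ξ x β) α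
  + deriv (fun x => f r θ φ ξ α x) β * deriv (fun x => g r θ x ξ α β) φ
  - deriv (fun x => f r θ x ξ α β) φ * deriv (fun x => g r θ φ ξ α x) β

/-- The Kerr symbol p, the coordinate function β, and the Carter constant 𝒦 are
pairwise in involution on the set where Δ(r) ≠ 0 and θ ∈ (0, π); moreover p and 𝒦
do not depend on φ. -/
theorem kerr_involution (M a : ℝ) (hM : 0 < M) (ha0 : 0 ≤ a) (haM : a < M) :
    let p : ℝ → ℝ → ℝ → ℝ → ℝ → ℝ → ℝ := fun r θ _φ ξ α β =>
      (r ^ 2 - 2 * M * r + a ^ 2) * ξ ^ 2 + α ^ 2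
        + (1 / (Real.sin θ) ^ 2 - a ^ 2 / (r ^ 2 - 2 * M * r + a ^ 2)) * β ^ 2
        - (4 * M * a * r / (r ^ 2 - 2 * M * r + a ^ 2)) * β
        - ((r ^ 2 + a ^ 2) ^ 2 / (r ^ 2 - 2 * M * r + a ^ 2)
            - a ^ 2 * (Real.sin θ) ^ 2)
    let K : ℝ → ℝ → ℝ → ℝ → ℝ → ℝ → ℝ := fun _r θ _φ _ξ α β =>
      α ^ 2 + (a * Real.sin θ - β / Real.sin θ) ^ 2
    let B : ℝ → ℝ → ℝ → ℝ → ℝ → ℝ → ℝ := fun _r _θ _φ _ξ _α β => β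
    (∀ r θ φ φ' ξ α β : ℝ, p r θ φ ξ α β = p r θ φ' ξ α β) ∧
    (∀ r θ φ φ' ξ α β : ℝ, K r θ φ ξ α β = K r θ φ' ξ α β) ∧
    (∀ r θ φ ξ α β : ℝ, r ^ 2 - 2 * M * r + a ^ 2 ≠ 0 → θ ∈ Set.Ioo 0 Real.pi →
      poissonBracket6 p B r θ φ ξ α β = 0 ∧
      poissonBracket6 B K r θ φ ξ α β = 0 ∧
      poissonBracket6 p K r θ φ ξ α β = 0) := by
  intro p K B
  refine ⟨fun _ _ _ _ _ _ _ => rfl, fun _ _ _ _ _ _ _ => rfl, ?_⟩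
  intro r θ φ ξ α β hΔ hθ
  have hs : Real.sin θ ≠ 0 := (Real.sin_pos_of_mem_Ioo hθ).ne'
  refine ⟨by simp [poissonBracket6, p, B], by simp [poissonBracket6, K, B], ?_⟩
  have hsd := Real.hasDerivAt_sin θ
  have hKα : deriv (fun x => K r θ φ ξ x β) α = 2 * α := by
    have h := ((hasDerivAt_id α).pow 2).add_const ((a * Real.sin θ - β / Real.sin θ) ^ 2)
    refine (h.congr_deriv ?_).deriv
    simp
  have hpα : deriv (fun x => p r θ φ ξ x β) α = 2 * α := by
    have h := (((((hasDerivAt_id α).pow 2).const_add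
      ((r ^ 2 - 2 * M * r + a ^ 2) * ξ ^ 2)).add_const
      ((1 / (Real.sin θ) ^ 2 - a ^ 2 / (r ^ 2 - 2 * M * r + a ^ 2)) * β ^ 2)).sub_const
      ((4 * M * a * r / (r ^ 2 - 2 * M * r + a ^ 2)) * β)).sub_const
      ((r ^ 2 + a ^ 2) ^ 2 / (r ^ 2 - 2 * M * r + a ^ 2) - a ^ 2 * (Real.sin θ) ^ 2)
    refine (h.congr_deriv ?_).deriv
    simp
  have hθ' : deriv (fun x => p r x φ ξ α β) θ = deriv (fun x => K r x φ ξ α β) θ := by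
    have hev : (fun x => p r x φ ξ α β) =ᶠ[nhds θ] fun x => K r x φ ξ α β +
        ((r ^ 2 - 2 * M * r + a ^ 2) * ξ ^ 2 - a ^ 2 / (r ^ 2 - 2 * M * r + a ^ 2) * β ^ 2
        - (4 * M * a * r / (r ^ 2 - 2 * M * r + a ^ 2)) * β
        - (r ^ 2 + a ^ 2) ^ 2 / (r ^ 2 - 2 * M * r + a ^ 2) + 2 * a * β) := by
      filter_upwards [Real.continuous_sin.continuousAt.eventually_ne hs] with x hx
      simp only [p, K]
      generalize r ^ 2 - 2 * M * r + a ^ 2 = D at hΔ ⊢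
      field_simp
      ring
    rw [hev.deriv_eq, deriv_add_const]
  have hKr : deriv (fun x => K x θ φ ξ α β) r = 0 := by simp [K]
  have hKξ : deriv (fun x => K r θ φ x α β) ξ = 0 := by simp [K]
  have hKφ : deriv (fun x => K r θ x ξ α β) φ = 0 := by simp [K]
  have hpφ : deriv (fun x => p r θ x ξ α β) φ = 0 := by simp [p]
  unfold poissonBracket6
  rw [hKα, hpα, hθ', hKr, hKξ, hKφ, hpφ]
  ring
end

section
/- The escape-function weight is an order function (Lemma 4.3): let Q ⊆ ℝ^d be a compact set, Γ₊, Γ₋ ⊆ ℝ^d nonempty sets, C ≥ 1, and let φ₊, φ₋ : ℝ^d → ℝ satisfy (1/C)·dist(ρ, Γ±) ≤ |φ±(ρ)| ≤ C·dist(ρ, Γ±) for all ρ ∈ Q. Let χ, g : ℝ^d → ℝ be bounded Lipschitz functions. For ε ∈ (0, 1/2] define G_ε(ρ) = χ(ρ)·log((φ₋(ρ)² + ε²)/(φ₊(ρ)² + ε²)) + log(1/ε²)·g(ρ). Then there exist constants C₂ ≥ 1 and N > 0 such that for all ε ∈ (0, 1/2] and all ρ, ρ' ∈ Q: exp(G_ε(ρ)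 − G_ε(ρ')) ≤ C₂·(1 + |ρ − ρ'|²/ε²)^N. -/
open scoped NNReal

lemma aux_step1 (C a a' δ δ' r ε : ℝ) (hC : 1 ≤ C) (hε : 0 < ε)
    (hδ : 0 ≤ δ) (hδ' : 0 ≤ δ') (hr : 0 ≤ r) (h1 : |a| ≤ C * δ) (h2 : (1 / C) * δ' ≤ |a'|)
    (h3 : δ ≤ δ' + r) :
    Real.log (a ^ 2 + ε ^ 2) - Real.log (a' ^ 2 + ε ^ 2)
      ≤ Real.log (2 * C ^ 4) + Real.log (1 + r ^ 2 / ε ^ 2) := by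
  have hC0 : 0 < C := by linarith
  have hd : δ' ≤ C * |a'| := by
    rw [one_div, inv_mul_le_iff₀ hC0] at h2
    exact h2
  have e1 : a ^ 2 ≤ C ^ 2 * δ ^ 2 := by
    rw [← sq_abs a, ← mul_pow]
    exact pow_le_pow_left₀ (abs_nonneg a) h1 2
  have e2 : δ' ^ 2 ≤ C ^ 2 * a' ^ 2 := by
    rw [← sq_abs a', ← mul_pow]
    exact pow_le_pow_left₀ hδ' hd 2
  have e3 : δ ^ 2 ≤ 2 * (δ' ^ 2 + r ^ 2) := by
    have := pow_le_pow_left₀ hδ h3 2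
    nlinarith [sq_nonneg (δ' - r)]
  have c2 : 1 ≤ C ^ 2 := one_le_pow₀ hC
  have c4 : C ^ 2 ≤ C ^ 4 := pow_le_pow_right₀ hC (by norm_num)
  have e4 : a ^ 2 ≤ 2 * C ^ 4 * a' ^ 2 + 2 * C ^ 4 * r ^ 2 := by
    have k1 : C ^ 2 * δ ^ 2 ≤ C ^ 2 * (2 * (C ^ 2 * a' ^ 2 + r ^ 2)) := by
      gcongr
      linarith
    have k2 : C ^ 2 * r ^ 2 ≤ C ^ 4 * r ^ 2 := by gcongr
    nlinarith
  have e5 : ε ^ 2 ≤ 2 * C ^ 4 * ε ^ 2 := by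
    have : 0 ≤ ε ^ 2 := by positivity
    nlinarith
  have e6 : a ^ 2 + ε ^ 2 ≤ 2 * C ^ 4 * (1 + r ^ 2 / ε ^ 2) * (a' ^ 2 + ε ^ 2) := by
    have : 2 * C ^ 4 * (1 + r ^ 2 / ε ^ 2) * (a' ^ 2 + ε ^ 2)
        = 2 * C ^ 4 * a' ^ 2 + 2 * C ^ 4 * r ^ 2 + 2 * C ^ 4 * ε ^ 2
          + 2 * C ^ 4 * (r ^ 2 / ε ^ 2 * a' ^ 2) := by
      field_simp
      ring
    have h0 : 0 ≤ 2 * C ^ 4 * (r ^ 2 / ε ^ 2 * a' ^ 2) := by positivity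
    linarith
  have h7 := Real.log_le_log (by positivity) e6
  rw [Real.log_mul (by positivity) (by positivity),
    Real.log_mul (by positivity) (by positivity)] at h7
  linarith

lemma aux_step2 (C M a δ ε : ℝ) (hC : 1 ≤ C) (hε : 0 < ε) (hε1 : ε ≤ 1 / 2)
    (hδ : 0 ≤ δ) (hM : δ ≤ M) (h1 : |a| ≤ C * δ) :
    |Real.log (a ^ 2 + ε ^ 2)| ≤ Real.log (C ^ 2 * M ^ 2 + 1) + Real.log (1 / ε ^ 2) := by
  have e1 : a ^ 2 ≤ C ^ 2 * M ^ 2 := by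
    rw [← sq_abs a, ← mul_pow]
    exact pow_le_pow_left₀ (abs_nonneg a) (h1.trans (by gcongr)) 2
  have e2 : ε ^ 2 ≤ 1 := by nlinarith
  have h0 : 0 ≤ Real.log (C ^ 2 * M ^ 2 + 1) := Real.log_nonneg (by nlinarith [sq_nonneg (C * M)])
  have hl : 0 ≤ Real.log (1 / ε ^ 2) :=
    Real.log_nonneg (by rw [le_div_iff₀ (by positivity)]; linarith)
  have u := Real.log_le_log (by positivity : 0 < a ^ 2 + ε ^ 2)
    (by linarith : a ^ 2 + ε ^ 2 ≤ C ^ 2 * M ^ 2 + 1)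
  have l := Real.log_le_log (by positivity : 0 < ε ^ 2)
    (by nlinarith : ε ^ 2 ≤ a ^ 2 + ε ^ 2)
  have : Real.log (1 / ε ^ 2) = - Real.log (ε ^ 2) := by rw [one_div, Real.log_inv]
  rw [abs_le]
  constructor <;> linarith

lemma aux_step3 (r D ε : ℝ) (hε : 0 < ε) (hr : 0 ≤ r) (hD : r ≤ D) :
    r * Real.log (1 / ε ^ 2) ≤ 2 + D * Real.log (1 + r ^ 2 / ε ^ 2) := by
  have hL : 0 ≤ Real.log (1 + r ^ 2 / ε ^ 2) :=
    Real.log_nonneg (by linarith [show 0 ≤ r ^ 2 / ε ^ 2 by positivity])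
  rcases hr.eq_or_lt with h | h
  · subst h
    nlinarith [mul_nonneg hD hL]
  have h1 : Real.log (r ^ 2 * (1 / ε ^ 2)) ≤ Real.log (1 + r ^ 2 / ε ^ 2) := by
    apply Real.log_le_log (by positivity)
    rw [mul_one_div]
    linarith
  rw [Real.log_mul (by positivity) (by positivity), Real.log_pow] at h1
  push_cast at h1
  have h2 := Real.one_sub_inv_le_log_of_pos h
  have h3 : r - 1 ≤ r * Real.log r := by
    have := mul_le_mul_of_nonneg_left h2 hr
    rwa [mul_sub, mul_one, mul_inv_cancel₀ h.ne'] at this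
  have h4 := mul_le_mul_of_nonneg_left h1 hr
  have h5 := mul_le_mul_of_nonneg_right hD hL
  nlinarith

/-- The escape-function weight is an order function (Lemma 4.3): with
G_ε(ρ) = χ(ρ)·log((φ₋² + ε²)/(φ₊² + ε²)) + log(1/ε²)·g(ρ), where φ± are comparable
to the distances to Γ± on a compact set Q and χ, g are bounded Lipschitz, there are
C₂ ≥ 1 and N > 0 with exp(G_ε(ρ) − G_ε(ρ')) ≤ C₂(1 + |ρ−ρ'|²/ε²)^N on Q. -/
theorem escape_weight_order_function (d : ℕ)
    (Q : Set (EuclideanSpace ℝ (Fin d))) (hQ : IsCompact Q)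
    (Γp Γm : Set (EuclideanSpace ℝ (Fin d))) (hΓp : Γp.Nonempty) (hΓm : Γm.Nonempty)
    (C : ℝ) (hC : 1 ≤ C)
    (φp φm : EuclideanSpace ℝ (Fin d) → ℝ)
    (hφp : ∀ ρ ∈ Q, (1 / C) * Metric.infDist ρ Γp ≤ |φp ρ| ∧
      |φp ρ| ≤ C * Metric.infDist ρ Γp)
    (hφm : ∀ ρ ∈ Q, (1 / C) * Metric.infDist ρ Γm ≤ |φm ρ| ∧
      |φm ρ| ≤ C * Metric.infDist ρ Γm)
    (χ g : EuclideanSpace ℝ (Fin d) → ℝ)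
    (Kχ Kg : ℝ≥0) (hχlip : LipschitzWith Kχ χ) (hglip : LipschitzWith Kg g)
    (Bχ Bg : ℝ) (hχb : ∀ x, |χ x| ≤ Bχ) (hgb : ∀ x, |g x| ≤ Bg) :
    ∃ C₂ N : ℝ, 1 ≤ C₂ ∧ 0 < N ∧
      ∀ ε ∈ Set.Ioc (0 : ℝ) (1 / 2), ∀ ρ ∈ Q, ∀ ρ' ∈ Q,
        Real.exp
          ((χ ρ * Real.log ((φm ρ ^ 2 + ε ^ 2) / (φp ρ ^ 2 + ε ^ 2))
              + Real.log (1 / ε ^ 2) * g ρ)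
            - (χ ρ' * Real.log ((φm ρ' ^ 2 + ε ^ 2) / (φp ρ' ^ 2 + ε ^ 2))
              + Real.log (1 / ε ^ 2) * g ρ'))
          ≤ C₂ * (1 + ‖ρ - ρ'‖ ^ 2 / ε ^ 2) ^ N := by
  obtain ⟨R, hR⟩ := hQ.isBounded.subset_closedBall (0 : EuclideanSpace ℝ (Fin d))
  obtain ⟨p, hp⟩ := hΓp
  obtain ⟨m, hm⟩ := hΓm
  obtain ⟨D, hDdef⟩ : ∃ D, D = 2 * |R| := ⟨_, rfl⟩
  obtain ⟨M, hMdef⟩ : ∃ M, M = |R| + ‖p‖ + ‖m‖ := ⟨_, rfl⟩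
  have hn : ∀ ρ ∈ Q, ‖ρ‖ ≤ |R| := fun ρ h => by
    have := hR h
    rw [mem_closedBall_zero_iff] at this
    exact this.trans (le_abs_self R)
  have hMp : ∀ ρ ∈ Q, Metric.infDist ρ Γp ≤ M := fun ρ h => by
    have h1 := Metric.infDist_le_dist_of_mem (x := ρ) hp
    have h2 := norm_sub_le ρ p
    rw [dist_eq_norm] at h1
    linarith [hn ρ h, norm_nonneg m]
  have hMm : ∀ ρ ∈ Q, Metric.infDist ρ Γm ≤ M := fun ρ h => by
    have h1 := Metric.infDist_le_dist_of_mem (x := ρ) hm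
    have h2 := norm_sub_le ρ m
    rw [dist_eq_norm] at h1
    linarith [hn ρ h, norm_nonneg p]
  have hB : 0 ≤ Bχ := (abs_nonneg _).trans (hχb 0)
  have hD0 : 0 ≤ D := by rw [hDdef]; positivity
  obtain ⟨c1, hc1⟩ : ∃ c, c = Real.log (2 * C ^ 4) := ⟨_, rfl⟩
  obtain ⟨c2, hc2⟩ : ∃ c, c = Real.log (C ^ 2 * M ^ 2 + 1) := ⟨_, rfl⟩
  have hc1' : 0 ≤ c1 := by
    rw [hc1]
    exact Real.log_nonneg (by linarith [one_le_pow₀ (n := 4) hC])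
  have hc2' : 0 ≤ c2 := by
    rw [hc2]
    exact Real.log_nonneg (by nlinarith [sq_nonneg (C * M)])
  have hKχ : (0 : ℝ) ≤ Kχ := Kχ.2
  have hKg : (0 : ℝ) ≤ Kg := Kg.2
  refine ⟨Real.exp (2 * Bχ * c1 + 2 * Kχ * D * c2 + (2 * Kχ + Kg) * 2),
    2 * Bχ + (2 * Kχ + Kg) * D + 1, Real.one_le_exp (by positivity), by positivity, ?_⟩
  rintro ε ⟨hε, hε1⟩ ρ hρ ρ' hρ'
  obtain ⟨r, hrdef⟩ : ∃ r, r = ‖ρ - ρ'‖ := ⟨_, rfl⟩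
  have hr : 0 ≤ r := by rw [hrdef]; positivity
  have hrD : r ≤ D := by
    rw [hrdef, hDdef]
    linarith [norm_sub_le ρ ρ', hn ρ hρ, hn ρ' hρ']
  have hi : ∀ S : Set (EuclideanSpace ℝ (Fin d)),
      Metric.infDist ρ S ≤ Metric.infDist ρ' S + r := fun S => by
    rw [hrdef, ← dist_eq_norm]
    exact Metric.infDist_le_infDist_add_dist
  have hi' : ∀ S : Set (EuclideanSpace ℝ (Fin d)),
      Metric.infDist ρ' S ≤ Metric.infDist ρ S + r := fun S => by
    rw [hrdef, ← dist_eq_norm, dist_comm]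
    exact Metric.infDist_le_infDist_add_dist
  have nn := fun (x : EuclideanSpace ℝ (Fin d)) S => Metric.infDist_nonneg (x := x) (s := S)
  have p1 := aux_step1 C (φp ρ) (φp ρ') _ _ r ε hC hε (nn _ _) (nn _ _) hr
    (hφp ρ hρ).2 (hφp ρ' hρ').1 (hi Γp)
  have p2 := aux_step1 C (φp ρ') (φp ρ) _ _ r ε hC hε (nn _ _) (nn _ _) hr
    (hφp ρ' hρ').2 (hφp ρ hρ).1 (hi' Γp)
  have m1 := aux_step1 C (φm ρ) (φm ρ') _ _ r ε hC hε (nn _ _) (nn _ _) hr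
    (hφm ρ hρ).2 (hφm ρ' hρ').1 (hi Γm)
  have m2 := aux_step1 C (φm ρ') (φm ρ) _ _ r ε hC hε (nn _ _) (nn _ _) hr
    (hφm ρ' hρ').2 (hφm ρ hρ).1 (hi' Γm)
  have p3 := aux_step2 C M (φp ρ') _ ε hC hε hε1 (nn _ _) (hMp ρ' hρ') (hφp ρ' hρ').2
  have m3 := aux_step2 C M (φm ρ') _ ε hC hε hε1 (nn _ _) (hMm ρ' hρ') (hφm ρ' hρ').2
  have s3 := aux_step3 r D ε hε hr hrD
  have hχd : |χ ρ - χ ρ'| ≤ Kχ * r := by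
    have := hχlip.dist_le_mul ρ ρ'
    rwa [Real.dist_eq, dist_eq_norm, ← hrdef] at this
  have hgd : |g ρ - g ρ'| ≤ Kg * r := by
    have := hglip.dist_le_mul ρ ρ'
    rwa [Real.dist_eq, dist_eq_norm, ← hrdef] at this
  have hl0 : 0 ≤ Real.log (1 / ε ^ 2) :=
    Real.log_nonneg (by rw [le_div_iff₀ (by positivity)]; nlinarith)
  have hpos : 0 < 1 + r ^ 2 / ε ^ 2 := by positivity
  have hL0 : 0 ≤ Real.log (1 + r ^ 2 / ε ^ 2) :=
    Real.log_nonneg (by linarith [show 0 ≤ r ^ 2 / ε ^ 2 by positivity])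
  rw [← hrdef, Real.rpow_def_of_pos hpos, ← Real.exp_add, Real.exp_le_exp,
    Real.log_div (x := φm ρ ^ 2 + ε ^ 2) (by positivity) (by positivity),
    Real.log_div (x := φm ρ' ^ 2 + ε ^ 2) (by positivity) (by positivity)]
  rw [← hc1] at p1 p2 m1 m2
  rw [← hc2] at p3 m3
  generalize Real.log (1 + r ^ 2 / ε ^ 2) = L at *
  generalize Real.log (1 / ε ^ 2) = l at *
  generalize Real.log (φp ρ ^ 2 + ε ^ 2) = P at *
  generalize Real.log (φm ρ ^ 2 + ε ^ 2) = Mm at *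
  generalize Real.log (φp ρ' ^ 2 + ε ^ 2) = P' at *
  generalize Real.log (φm ρ' ^ 2 + ε ^ 2) = Mm' at *
  have hF : |(Mm - P) - (Mm' - P')| ≤ 2 * (c1 + L) := by
    rw [abs_le]
    constructor <;> linarith
  have hF' : |Mm' - P'| ≤ 2 * (c2 + l) := by
    have := abs_sub Mm' P'
    linarith
  have t1 : χ ρ * ((Mm - P) - (Mm' - P')) ≤ Bχ * (2 * (c1 + L)) := by
    refine (le_abs_self _).trans ?_
    rw [abs_mul]
    exact mul_le_mul (hχb ρ) hF (abs_nonneg _) hB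
  have t2 : (χ ρ - χ ρ') * (Mm' - P') ≤ Kχ * r * (2 * (c2 + l)) := by
    refine (le_abs_self _).trans ?_
    rw [abs_mul]
    exact mul_le_mul hχd hF' (abs_nonneg _) (by positivity)
  have t3 : l * (g ρ - g ρ') ≤ l * (Kg * r) :=
    mul_le_mul_of_nonneg_left ((le_abs_self _).trans hgd) hl0
  have t4 : (2 * Kχ + Kg) * (r * l) ≤ (2 * Kχ + Kg) * (2 + D * L) :=
    mul_le_mul_of_nonneg_left s3 (by positivity)
  have t5 : 2 * Kχ * c2 * r ≤ 2 * Kχ * c2 * D :=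
    mul_le_mul_of_nonneg_left hrD (by positivity)
  linarith
end

section
/- Kuranishi factorization with midpoint estimate (equation (3.10) in the proof of Lemma 3.2): let f : ℝⁿ → ℝⁿ be three times continuously differentiable with ‖D³f(z)‖ ≤ K for all z in a convex set S ⊆ ℝⁿ, and define F(x, y) = ∫₀¹ Df(y + s(x − y)) ds (an n×n-matrix-valued function). Then for all x, y ∈ S: f(x) − f(y) = F(x, y)(x − y), and ‖F(x, y) − Df((x + y)/2)‖ ≤ (K/24)·‖x − y‖². -/
theorem taylor_aux {E F : Type*} [NormedAddCommGroup E] [NormedSpace ℝ E]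
    [NormedAddCommGroup F] [NormedSpace ℝ F] (G : E → F) (hG : ContDiff ℝ 2 G)
    (S : Set E) (hS : Convex ℝ S) (K : ℝ)
    (hK : ∀ z ∈ S, ‖fderiv ℝ (fderiv ℝ G) z‖ ≤ K) (c w : E) (hc : c ∈ S) (hw : c + w ∈ S) :
    ‖G (c + w) - G c - fderiv ℝ G c w‖ ≤ K * ‖w‖ ^ 2 / 2 := by
  have hG1 : Differentiable ℝ G := hG.differentiable (by norm_num)
  have hG2 : Differentiable ℝ (fderiv ℝ G) :=
    (hG.fderiv_right (m := 1) (by norm_num)).differentiable (by norm_num)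
  have hmem : ∀ t ∈ Set.Icc (0 : ℝ) 1, c + t • w ∈ S := fun t ht => by
    have := hS.add_smul_sub_mem hc hw ht
    simpa using this
  have hd : ∀ t : ℝ, HasDerivAt (fun t : ℝ => G (c + t • w) - G c - t • fderiv ℝ G c w)
      (fderiv ℝ G (c + t • w) w - fderiv ℝ G c w) t := by
    intro t
    have h1 : HasDerivAt (fun t : ℝ => c + t • w) w t := by
      simpa using ((hasDerivAt_id t).smul_const w).const_add c
    have h2 := (hG1 (c + t • w)).hasFDerivAt.comp_hasDerivAt t h1
    have h3 : HasDerivAt (fun t : ℝ => t • fderiv ℝ G c w) (fderiv ℝ G c w) t := by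
      simpa using (hasDerivAt_id t).smul_const (fderiv ℝ G c w)
    exact (h2.sub_const (G c)).sub h3
  have key := image_norm_le_of_norm_deriv_right_le_deriv_boundary (a := (0 : ℝ)) (b := 1)
    (f := fun t : ℝ => G (c + t • w) - G c - t • fderiv ℝ G c w)
    (f' := fun t : ℝ => fderiv ℝ G (c + t • w) w - fderiv ℝ G c w)
    (B := fun t => K * ‖w‖ ^ 2 * t ^ 2 / 2) (B' := fun t => K * ‖w‖ ^ 2 * t)
    (fun t _ => (hd t).continuousAt.continuousWithinAt)
    (fun t _ => (hd t).hasDerivWithinAt) (by simp)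
    (by
      intro t
      have := ((hasDerivAt_pow 2 t).const_mul (K * ‖w‖ ^ 2)).div_const 2
      have e : K * ‖w‖ ^ 2 * (((2 : ℕ) : ℝ) * t ^ (2 - 1)) / 2 = K * ‖w‖ ^ 2 * t := by
        norm_num
        ring
      exact e ▸ this)
    (by
      intro t ht
      have hm := hmem t ⟨ht.1, ht.2.le⟩
      have h := hS.norm_image_sub_le_of_norm_fderiv_le (𝕜 := ℝ) (fun z _ => hG2 z) hK hc hm
      rw [← sub_apply]
      refine (ContinuousLinearMap.le_opNorm _ _).trans ?_
      refine (mul_le_mul_of_nonneg_right h (norm_nonneg w)).trans (le_of_eq ?_)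
      rw [add_sub_cancel_left, norm_smul, Real.norm_of_nonneg ht.1]
      ring)
  have := key (x := 1) (by simp)
  simpa using this

theorem kuranishi_aux {E : Type*} [NormedAddCommGroup E]
    [NormedSpace ℝ E] [CompleteSpace E]
    (f : E → E)
    (hf : ContDiff ℝ 3 f)
    (S : Set (E)) (hS : Convex ℝ S)
    (K : ℝ) (hK : ∀ z ∈ S, ‖iteratedFDeriv ℝ 3 f z‖ ≤ K) :
    ∀ x ∈ S, ∀ y ∈ S,
      f x - f y = (∫ s in (0 : ℝ)..1, fderiv ℝ f (y + s • (x - y))) (x - y) ∧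
      ‖(∫ s in (0 : ℝ)..1, fderiv ℝ f (y + s • (x - y)))
          - fderiv ℝ f ((2⁻¹ : ℝ) • (x + y))‖ ≤ K / 24 * ‖x - y‖ ^ 2 := by
  intro x hx y hy
  set v := x - y with hv
  have hf1 : Differentiable ℝ f := hf.differentiable (by norm_num)
  have hG : ContDiff ℝ 2 (fderiv ℝ f) := hf.fderiv_right (by norm_num)
  have hcont : Continuous (fun s : ℝ => fderiv ℝ f (y + s • v)) :=
    hG.continuous.comp (by fun_prop)
  have hint : IntervalIntegrable (fun s : ℝ => fderiv ℝ f (y + s • v)) MeasureTheory.volume 0 1 :=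
    hcont.intervalIntegrable 0 1
  constructor
  · rw [ContinuousLinearMap.intervalIntegral_apply hint]
    have hd : ∀ t ∈ Set.uIcc (0 : ℝ) 1, HasDerivAt (fun t : ℝ => f (y + t • v))
        (fderiv ℝ f (y + t • v) v) t := by
      intro t _
      have h1 : HasDerivAt (fun t : ℝ => y + t • v) v t := by
        simpa using ((hasDerivAt_id t).smul_const v).const_add y
      exact (hf1 (y + t • v)).hasFDerivAt.comp_hasDerivAt t h1
    rw [intervalIntegral.integral_eq_sub_of_hasDerivAt hd
      ((hcont.clm_apply continuous_const).intervalIntegrable 0 1)]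
    simp [hv]
  · have hK' : ∀ z ∈ S, ‖fderiv ℝ (fderiv ℝ (fderiv ℝ f)) z‖ ≤ K := by
      intro z hz
      have h := hK z hz
      rw [← norm_iteratedFDeriv_fderiv, ← norm_iteratedFDeriv_fderiv,
        ← norm_iteratedFDeriv_fderiv, norm_iteratedFDeriv_zero] at h
      exact h
    set c := (2⁻¹ : ℝ) • (x + y) with hc
    have hline : ∀ s : ℝ, y + s • v = c + (s - 1 / 2) • v := by
      intro s
      rw [hc, hv]
      module
    have hmem : ∀ s ∈ Set.Icc (0 : ℝ) 1, y + s • v ∈ S := fun s hs =>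
      hS.add_smul_sub_mem hy hx hs
    have hcS : c ∈ S := by
      have := hmem (1 / 2) ⟨by norm_num, by norm_num⟩
      rw [hline] at this
      simpa using this
    set L := fderiv ℝ (fderiv ℝ f) c v with hL
    have hcl : Continuous (fun s : ℝ => (s - 1 / 2) • L) := by fun_prop
    have hzero : ∫ s in (0 : ℝ)..1, (s - 1 / 2) • L = 0 := by
      rw [intervalIntegral.integral_smul_const]
      have : ∫ s in (0 : ℝ)..1, (s - 1 / 2) = 0 := by
        rw [intervalIntegral.integral_sub (by simp) (by simp)]
        norm_num
      rw [this, zero_smul]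
    have hsplit : (∫ s in (0 : ℝ)..1, fderiv ℝ f (y + s • v)) - fderiv ℝ f c
        = ∫ s in (0 : ℝ)..1, (fderiv ℝ f (y + s • v) - fderiv ℝ f c - (s - 1 / 2) • L) := by
      rw [intervalIntegral.integral_sub (hint.sub (by simp)) (hcl.intervalIntegrable 0 1),
        intervalIntegral.integral_sub hint (by simp), hzero]
      simp
    rw [hsplit]
    have hb : ∀ s ∈ Set.Ioc (0 : ℝ) 1,
        ‖fderiv ℝ f (y + s • v) - fderiv ℝ f c - (s - 1 / 2) • L‖
          ≤ K * ‖v‖ ^ 2 / 2 * (s - 1 / 2) ^ 2 := by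
      intro s hs
      have hm := hmem s ⟨hs.1.le, hs.2⟩
      rw [hline] at hm ⊢
      have h := taylor_aux (fderiv ℝ f) hG S hS K hK' c ((s - 1 / 2) • v) hcS hm
      rw [map_smul] at h
      refine h.trans (le_of_eq ?_)
      rw [norm_smul, mul_pow, Real.norm_eq_abs, sq_abs]
      ring
    refine (intervalIntegral.norm_integral_le_of_norm_le (zero_le_one)
      (Filter.Eventually.of_forall hb)
      (Continuous.intervalIntegrable (by fun_prop) 0 1)).trans (le_of_eq ?_)
    rw [intervalIntegral.integral_const_mul,
      intervalIntegral.integral_comp_sub_right (fun s : ℝ => s ^ 2) (1 / 2), integral_pow]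
    norm_num
    ring

/-- Kuranishi factorization with midpoint estimate (equation (3.10)): if f is C³ with
‖D³f‖ ≤ K on a convex set S and F(x, y) = ∫₀¹ Df(y + s(x − y)) ds, then for x, y ∈ S
one has f(x) − f(y) = F(x, y)(x − y) and
‖F(x, y) − Df((x + y)/2)‖ ≤ (K/24)‖x − y‖². -/
theorem kuranishi_midpoint_estimate (n : ℕ)
    (f : EuclideanSpace ℝ (Fin n) → EuclideanSpace ℝ (Fin n))
    (hf : ContDiff ℝ 3 f)
    (S : Set (EuclideanSpace ℝ (Fin n))) (hS : Convex ℝ S)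
    (K : ℝ) (hK : ∀ z ∈ S, ‖iteratedFDeriv ℝ 3 f z‖ ≤ K) :
    ∀ x ∈ S, ∀ y ∈ S,
      f x - f y = (∫ s in (0 : ℝ)..1, fderiv ℝ f (y + s • (x - y))) (x - y) ∧
      ‖(∫ s in (0 : ℝ)..1, fderiv ℝ f (y + s • (x - y)))
          - fderiv ℝ f ((2⁻¹ : ℝ) • (x + y))‖ ≤ K / 24 * ‖x - y‖ ^ 2 := by
  exact kuranishi_aux f hf S hS K hK
end
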